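/- Let (R, m, k) be a Noetherian local ring of characteristic p > 0, let G• be a bounded-below complex of finitely generated free R-modules whose homology modules all have finite length, and suppose N is a finitely generated R-module of dimension t. Then for each i ≥ 0, the lengths λ(H_i(F^e(G•) ⊗_R N)) are finite for all e, and λ(H_i(F^e(G•) ⊗_R N)) = O(q^t) as q = p^e → ∞. -/

import Mathlib

/-- The linear map `Nⁿ → Nᵐ` induced by an `m × n` matrix over `R`. -/
noncomputable def matVec {R : Type*} [CommRing R] {m n : ℕ} (A : Matrix (Fin m) (Fin n) R)
    (N : Type*) [AddCommGroup N] [Module R N] : (Fin n → N) →ₗ[R] (Fin m → N) where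
  toFun v := fun i => ∑ j, A i j • v j
  map_add' v w := by
    funext i
    simp [smul_add, Finset.sum_add_distrib]
  map_smul' c v := by
    funext i
    simp [Finset.smul_sum, smul_comm c]

/-- The length of an `R`-module `M`: the Krull dimension of its lattice of submodules. -/
noncomputable def moduleLength (R M : Type*) [Ring R] [AddCommGroup M] [Module R M] :
    WithBot ℕ∞ :=
  Order.krullDim (Submodule R M)

/-- The length of the `i`-th homology module of the complex
`… → N^{r(j+1)} → N^{r j} → … → N^{r 0} → 0` obtained by applying the matrices
`A j : Matrix (Fin (r j)) (Fin (r (j+1))) R` (the differentials of a bounded-below complex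
of finite free modules) to `N`. -/
noncomputable def homologyLength {R : Type*} [CommRing R] (r : ℕ → ℕ)
    (A : ∀ j, Matrix (Fin (r j)) (Fin (r (j + 1))) R)
    (N : Type*) [AddCommGroup N] [Module R N] : ℕ → WithBot ℕ∞
  | 0 => moduleLength R ((Fin (r 0) → N) ⧸ LinearMap.range (matVec (A 0) N))
  | (j + 1) => moduleLength R
      (↥(LinearMap.ker (matVec (A j) N)) ⧸
        (Submodule.comap (LinearMap.ker (matVec (A j) N)).subtype
          (LinearMap.range (matVec (A (j + 1)) N))))

/-!
Let `I` be the ideal of scalars `x` whose multiplication on `Gᵢ` is null-homotopic,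
`x = E h + k D`. A null-homotopy survives tensoring with any `N`, and raising its entries to the
power `q` shows that `x ^ q` annihilates `Hᵢ(F^e(G•) ⊗ N)`. By induction on the degree `I` contains
the product of the annihilators of `H₀(G•), …, Hᵢ(G•)`, so every prime containing `I` is maximal.

If `x ∈ I` is regular on `N`, then `Hᵢ(F^e(G•) ⊗ N) / x` embeds into `Hᵢ(F^e(G•) ⊗ N / x N)`;
filtering by powers of `x` bounds the length of `Hᵢ(F^e(G•) ⊗ N)` by `q` times that of
`Hᵢ(F^e(G•) ⊗ N / x N)`, where the dimension has dropped by one. A prime filtration reduces to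
`N = R / P`, which is either simple or admits such an `x`.
-/

section Length

variable {R M M₁ M₂ : Type*} [CommRing R] [AddCommGroup M] [Module R M]
  [AddCommGroup M₁] [Module R M₁] [AddCommGroup M₂] [Module R M₂]

theorem length_quotient_le_of_ker_le (g : M →ₗ[R] M₂) {P : Submodule R M}
    (h : LinearMap.ker g ≤ P) : Module.length R (M ⧸ P) ≤ Module.length R M₂ :=
  calc Module.length R (M ⧸ P)
      ≤ Module.length R (M ⧸ LinearMap.ker g) :=
        Module.length_le_of_surjective _ (Submodule.factor_surjective h)
    _ = Module.length R (LinearMap.range g) := g.quotKerEquivRange.length_eq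
    _ ≤ Module.length R M₂ := Module.length_le_of_injective _ (Submodule.subtype_injective _)

theorem length_le_add_of_ker_le_range (f : M₁ →ₗ[R] M) (g : M →ₗ[R] M₂)
    (h : LinearMap.ker g ≤ LinearMap.range f) :
    Module.length R M ≤ Module.length R M₁ + Module.length R M₂ := by
  rw [Module.length_eq_add_of_exact (LinearMap.range f).subtype (LinearMap.range f).mkQ
    (Submodule.subtype_injective _) (Submodule.mkQ_surjective _) (LinearMap.exact_subtype_mkQ _)]
  exact add_le_add (Module.length_le_of_surjective _ f.surjective_rangeRestrict)
    (length_quotient_le_of_ker_le g h)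

open Pointwise in
theorem length_quotSMulTop_mul_le (x y : R) :
    Module.length R (QuotSMulTop (x * y) M) ≤
      Module.length R (QuotSMulTop x M) + Module.length R (QuotSMulTop y M) := by
  have hsmul : x • (⊤ : Submodule R M) ≤ ((x * y) • ⊤ : Submodule R M).comap (y • .id) := by
    rintro _ ⟨m, -, rfl⟩
    exact ⟨m, trivial, (mul_comm x y ▸ mul_smul y x m :)⟩
  have hle : (x * y) • (⊤ : Submodule R M) ≤ y • ⊤ := by
    rintro _ ⟨m, -, rfl⟩
    exact ⟨x • m, trivial, (mul_comm x y ▸ mul_smul y x m :).symm⟩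
  refine length_le_add_of_ker_le_range (Submodule.mapQ _ _ _ hsmul) (Submodule.factor hle) ?_
  intro z hz
  obtain ⟨m, rfl⟩ := Submodule.Quotient.mk_surjective _ z
  obtain ⟨n, -, rfl⟩ := (Submodule.Quotient.mk_eq_zero _).1 hz
  exact ⟨Submodule.Quotient.mk n, rfl⟩

theorem length_quotSMulTop_pow_le (x : R) (q : ℕ) :
    Module.length R (QuotSMulTop (x ^ q) M) ≤ q * Module.length R (QuotSMulTop x M) := by
  induction q with
  | zero =>
    have : Subsingleton (QuotSMulTop (x ^ 0) M) := by
      simp [QuotSMulTop, Submodule.Quotient.subsingleton_iff]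
    simp
  | succ q ih =>
    rw [pow_succ, Nat.cast_succ, add_one_mul]
    exact (length_quotSMulTop_mul_le _ _).trans (by gcongr)

theorem length_quotSMulTop_of_mem_annihilator {x : R} (hx : x ∈ Module.annihilator R M) :
    Module.length R (QuotSMulTop x M) = Module.length R M := by
  refine (Submodule.quotEquivOfEqBot _ ((Submodule.eq_bot_iff _).2 ?_)).length_eq
  rintro _ ⟨m, -, rfl⟩
  exact Module.mem_annihilator.1 hx m

theorem isMaximal_of_isFiniteLength_of_mem_support (hM : IsFiniteLength R M) {P : PrimeSpectrum R}
    (hP : P ∈ Module.support R M) : P.asIdeal.IsMaximal := by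
  induction hM with
  | of_subsingleton => simp [Module.support_eq_empty] at hP
  | @of_simple_quotient M _ _ N _ _ ih =>
    rw [Module.support_of_exact (LinearMap.exact_subtype_mkQ N) (Submodule.subtype_injective _)
      (Submodule.mkQ_surjective _)] at hP
    refine hP.elim ih fun hP => ?_
    have : (Module.annihilator R (M ⧸ N)).IsMaximal := IsSimpleModule.annihilator_isMaximal
    exact this.eq_of_le P.2.ne_top (Module.annihilator_le_of_mem_support hP) ▸ this

theorem isMaximal_of_annihilator_le (hM : Module.length R M ≠ ⊤) {P : Ideal R} [hP : P.IsPrime]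
    (h : Module.annihilator R M ≤ P) : P.IsMaximal := by
  have hfl := Module.length_ne_top_iff.1 hM
  obtain ⟨_, -⟩ := isFiniteLength_iff_isNoetherian_isArtinian.1 hfl
  exact isMaximal_of_isFiniteLength_of_mem_support hfl (P := ⟨P, hP⟩)
    (Module.mem_support_iff_of_finite.2 h)

theorem length_ne_top_of_supportDim_le_zero [IsNoetherianRing R] [Module.Finite R M]
    (hM : Module.supportDim R M ≤ 0) : Module.length R M ≠ ⊤ := by
  rw [Module.supportDim_eq_ringKrullDim_quotient_annihilator] at hM
  have : Ring.KrullDimLE 0 (R ⧸ Module.annihilator R M) := Ring.krullDimLE_iff.2 hM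
  have : IsArtinianRing (R ⧸ Module.annihilator R M) := isArtinianRing_iff_krullDimLE_zero.2 this
  let := Module.quotientAnnihilator (R := R) (M := M)
  have : IsScalarTower R (R ⧸ Module.annihilator R M) M :=
    (Module.isTorsionBySet_annihilator R M).isScalarTower
  have : Module.Finite (R ⧸ Module.annihilator R M) M := .of_restrictScalars_finite R _ M
  rw [Module.length_eq_of_surjective (R := R ⧸ Module.annihilator R M) Ideal.Quotient.mk_surjective]
  exact Module.length_ne_top

end Length

section MatVec

variable {R N N' : Type*} [CommRing R] [AddCommGroup N] [Module R N] [AddCommGroup N'] [Module R N']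
  {l m n : ℕ}

theorem matVec_apply (A : Matrix (Fin m) (Fin n) R) (v : Fin n → N) (i : Fin m) :
    matVec A N v i = ∑ j, A i j • v j :=
  rfl

theorem matVec_matVec (A : Matrix (Fin l) (Fin m) R) (B : Matrix (Fin m) (Fin n) R)
    (v : Fin n → N) : matVec A N (matVec B N v) = matVec (A * B) N v := by
  funext i
  simp only [matVec_apply, Matrix.mul_apply, Finset.smul_sum, Finset.sum_smul, smul_smul]
  exact Finset.sum_comm

theorem matVec_zero (v : Fin n → N) : matVec (0 : Matrix (Fin m) (Fin n) R) N v = 0 := by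
  funext i
  simp [matVec_apply]

theorem matVec_smul_one (x : R) (v : Fin n → N) :
    matVec (x • (1 : Matrix (Fin n) (Fin n) R)) N v = x • v := by
  funext i
  simp [matVec_apply, Matrix.one_apply]

theorem matVec_add (A B : Matrix (Fin m) (Fin n) R) (v : Fin n → N) :
    matVec (A + B) N v = matVec A N v + matVec B N v := by
  funext i
  simp [matVec_apply, add_smul, Finset.sum_add_distrib]

theorem matVec_compLeft (A : Matrix (Fin m) (Fin n) R) (f : N →ₗ[R] N') (v : Fin n → N) :
    matVec A N' (f.compLeft _ v) = f.compLeft _ (matVec A N v) := by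
  funext i
  simp [matVec_apply]

end MatVec

section MatrixHomology

variable {R N N' N'' : Type*} [CommRing R] [AddCommGroup N] [Module R N]
  [AddCommGroup N'] [Module R N'] [AddCommGroup N''] [Module R N'']
  {a b c d : ℕ} (D : Matrix (Fin a) (Fin b) R) (E : Matrix (Fin b) (Fin c) R)

/-- The homology `ker D / im E` at the middle term of `Nᶜ → Nᵇ → Nᵃ`. The composite `D * E` is not
required to vanish: in general this is the quotient of `ker D` by `ker D ∩ im E`. -/
abbrev MatrixHomology (N : Type*) [AddCommGroup N] [Module R N] : Type _ :=
  LinearMap.ker (matVec D N) ⧸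
    (LinearMap.range (matVec E N)).submoduleOf (LinearMap.ker (matVec D N))

namespace MatrixHomology

theorem mk_eq_zero_iff (v : LinearMap.ker (matVec D N)) :
    (Submodule.Quotient.mk v : MatrixHomology D E N) = 0 ↔ ∃ w, matVec E N w = v :=
  Submodule.Quotient.mk_eq_zero _

theorem length_le : Module.length R (MatrixHomology D E N) ≤ b * Module.length R N :=
  calc Module.length R (MatrixHomology D E N)
      ≤ Module.length R (LinearMap.ker (matVec D N)) :=
        Module.length_le_of_surjective _ (Submodule.mkQ_surjective _)
    _ ≤ Module.length R (Fin b → N) :=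
        Module.length_le_of_injective _ (Submodule.subtype_injective _)
    _ = b * Module.length R N := by simp

/-- The map induced on homology by a linear map of coefficient modules. -/
noncomputable def map (f : N →ₗ[R] N') : MatrixHomology D E N →ₗ[R] MatrixHomology D E N' :=
  Submodule.mapQ _ _
    ((f.compLeft (Fin b)).restrict fun v (hv : matVec D N v = 0) =>
      show matVec D N' (f.compLeft _ v) = 0 by rw [matVec_compLeft, hv, map_zero])
    (by
      rintro ⟨_, _⟩ ⟨w, rfl⟩
      exact ⟨f.compLeft _ w, matVec_compLeft E f w⟩)

variable {D E}

theorem ker_map_le_range_map (hDE : D * E = 0) {f : N' →ₗ[R] N} {g : N →ₗ[R] N''}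
    (hf : Function.Injective f) (hg : Function.Surjective g) (hfg : Function.Exact f g) :
    LinearMap.ker (map D E g) ≤ LinearMap.range (map D E f) := by
  intro z hz
  obtain ⟨⟨v, hv⟩, rfl⟩ := Submodule.Quotient.mk_surjective _ z
  obtain ⟨w, hw : matVec E N'' w = g.compLeft _ v⟩ := (mk_eq_zero_iff D E _).1 hz
  obtain ⟨w, rfl⟩ := hg.comp_left w
  obtain ⟨u, hu⟩ : ∃ u, f.compLeft _ u = v - matVec E N w := by
    have hgv : g.compLeft _ (v - matVec E N w) = 0 := by
      rw [map_sub, ← hw, sub_eq_zero]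
      exact matVec_compLeft E g w
    choose u hu using fun i => (hfg _).1 (congrFun hgv i)
    exact ⟨u, funext hu⟩
  have hDu : matVec D N' u = 0 := by
    apply hf.comp_left
    change f.compLeft _ (matVec D N' u) = f.compLeft _ 0
    rw [← matVec_compLeft, hu, map_sub, LinearMap.mem_ker.1 hv, matVec_matVec, hDE, matVec_zero,
      sub_zero, map_zero]
  refine ⟨Submodule.Quotient.mk ⟨u, hDu⟩, (Submodule.Quotient.eq _).2 ⟨-w, ?_⟩⟩
  change matVec E N (-w) = f.compLeft _ u - v
  rw [hu, map_neg, sub_sub_cancel_left]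

theorem length_le_add (hDE : D * E = 0) {f : N' →ₗ[R] N} {g : N →ₗ[R] N''}
    (hf : Function.Injective f) (hg : Function.Surjective g) (hfg : Function.Exact f g) :
    Module.length R (MatrixHomology D E N) ≤
      Module.length R (MatrixHomology D E N') + Module.length R (MatrixHomology D E N'') :=
  length_le_add_of_ker_le_range _ _ (ker_map_le_range_map hDE hf hg hfg)

open Pointwise in
theorem length_quotSMulTop_le (hDE : D * E = 0) {x : R} (hx : IsSMulRegular N x) :
    Module.length R (QuotSMulTop x (MatrixHomology D E N)) ≤
      Module.length R (MatrixHomology D E (QuotSMulTop x N)) := by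
  refine length_quotient_le_of_ker_le (map D E (x • (⊤ : Submodule R N)).mkQ) ?_
  refine (ker_map_le_range_map hDE (f := LinearMap.lsmul R N x) hx (Submodule.mkQ_surjective _)
    (LinearMap.exact_lsmul_mkQ_smul_top N x)).trans ?_
  rintro _ ⟨z, rfl⟩
  obtain ⟨v, rfl⟩ := Submodule.Quotient.mk_surjective _ z
  exact ⟨Submodule.Quotient.mk v, trivial, rfl⟩

theorem exists_mul_eq_smul_of_mem_annihilator {x : R}
    (hx : x ∈ Module.annihilator R (MatrixHomology D E R)) {M : Matrix (Fin b) (Fin d) R}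
    (hM : D * M = 0) : ∃ h : Matrix (Fin c) (Fin d) R, E * h = x • M := by
  have hcycle (j : Fin d) : M.col j ∈ LinearMap.ker (matVec D R) :=
    funext fun i => congrFun₂ hM i j
  have hboundary (j : Fin d) : ∃ w, matVec E R w = x • M.col j :=
    (mk_eq_zero_iff D E (x • (⟨M.col j, hcycle j⟩ : LinearMap.ker (matVec D R)))).1
      (Module.mem_annihilator.1 hx (Submodule.Quotient.mk ⟨M.col j, hcycle j⟩))
  choose w hw using hboundary
  exact ⟨.of fun i j => w j i, Matrix.ext fun i j => congrFun (hw j) i⟩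

end MatrixHomology

end MatrixHomology

section NullHomotopy

variable {R S : Type*} [CommRing R] [CommRing S] {a b c d : ℕ}

/-- The ideal of scalars whose multiplication map on the middle term of `Rᶜ → Rᵇ → Rᵃ` is
null-homotopic, i.e. of the form `E h + k D`. -/
def nullHomotopyIdeal (D : Matrix (Fin a) (Fin b) R) (E : Matrix (Fin b) (Fin c) R) : Ideal R where
  carrier := {x | ∃ (h : Matrix (Fin c) (Fin b) R) (k : Matrix (Fin b) (Fin a) R),
    E * h + k * D = x • 1}
  add_mem' := by
    rintro x y ⟨h, k, hx⟩ ⟨h', k', hy⟩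
    exact ⟨h + h', k + k', by rw [Matrix.mul_add, Matrix.add_mul, add_smul, ← hx, ← hy]; abel⟩
  zero_mem' := ⟨0, 0, by simp⟩
  smul_mem' := by
    rintro y x ⟨h, k, hx⟩
    exact ⟨y • h, y • k, by
      rw [Matrix.mul_smul, Matrix.smul_mul, ← smul_add, hx, smul_smul, smul_eq_mul]⟩

theorem map_mul_map_eq_zero {D : Matrix (Fin a) (Fin b) R} {E : Matrix (Fin b) (Fin c) R}
    (φ : R →+* S) (hDE : D * E = 0) : D.map φ * E.map φ = 0 := by
  rw [← Matrix.map_mul, hDE, Matrix.map_zero _ (map_zero _)]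

theorem map_mem_nullHomotopyIdeal {D : Matrix (Fin a) (Fin b) R} {E : Matrix (Fin b) (Fin c) R}
    (φ : R →+* S) {x : R} (hx : x ∈ nullHomotopyIdeal D E) :
    φ x ∈ nullHomotopyIdeal (D.map φ) (E.map φ) := by
  obtain ⟨h, k, hx⟩ := hx
  refine ⟨h.map φ, k.map φ, ?_⟩
  rw [← Matrix.map_mul, ← Matrix.map_mul, ← Matrix.map_add _ (map_add φ), hx]
  ext i j
  simp [Matrix.one_apply, apply_ite φ]

theorem nullHomotopyIdeal_le_annihilator (D : Matrix (Fin a) (Fin b) R)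
    (E : Matrix (Fin b) (Fin c) R) (N : Type*) [AddCommGroup N] [Module R N] :
    nullHomotopyIdeal D E ≤ Module.annihilator R (MatrixHomology D E N) := by
  rintro x ⟨h, k, hx⟩
  refine Module.mem_annihilator.2 fun z => ?_
  obtain ⟨⟨v, hv⟩, rfl⟩ := Submodule.Quotient.mk_surjective _ z
  refine (MatrixHomology.mk_eq_zero_iff D E (x • ⟨v, hv⟩)).2 ⟨matVec h N v, ?_⟩
  calc matVec E N (matVec h N v)
      = matVec (E * h + k * D) N v := by
        rw [matVec_add, ← matVec_matVec, ← matVec_matVec, LinearMap.mem_ker.1 hv, map_zero,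
          add_zero]
    _ = x • v := by rw [hx, matVec_smul_one]

theorem annihilator_le_nullHomotopyIdeal_zero (E : Matrix (Fin b) (Fin c) R) :
    Module.annihilator R (MatrixHomology (0 : Matrix (Fin a) (Fin b) R) E R) ≤
      nullHomotopyIdeal (0 : Matrix (Fin a) (Fin b) R) E := by
  intro x hx
  obtain ⟨h, hh⟩ := MatrixHomology.exists_mul_eq_smul_of_mem_annihilator hx
    (Matrix.zero_mul (1 : Matrix (Fin b) (Fin b) R))
  exact ⟨h, 0, by rw [hh, Matrix.zero_mul, add_zero]⟩

/-- If `E h + k D = x`, then `x - h E` consists of cycles, so an annihilator of the homology turns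
it into boundaries. -/
theorem nullHomotopyIdeal_mul_annihilator_le {D : Matrix (Fin a) (Fin b) R}
    {E : Matrix (Fin b) (Fin c) R} (F : Matrix (Fin c) (Fin d) R) (hDE : D * E = 0) :
    nullHomotopyIdeal D E * Module.annihilator R (MatrixHomology E F R) ≤
      nullHomotopyIdeal E F := by
  refine Ideal.mul_le.2 ?_
  rintro x ⟨h, k, hx⟩ y hy
  have hcycle : E * (x • 1 - h * E) = 0 := by
    rw [Matrix.mul_sub, ← Matrix.mul_assoc, eq_sub_of_add_eq hx, Matrix.sub_mul, Matrix.mul_assoc,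
      hDE]
    simp
  obtain ⟨g, hg⟩ := MatrixHomology.exists_mul_eq_smul_of_mem_annihilator hy hcycle
  refine ⟨g, y • h, ?_⟩
  rw [hg, smul_sub, Matrix.smul_mul, sub_add_cancel, smul_smul, mul_comm]

theorem MatrixHomology.length_le_mul_length_quotSMulTop {D : Matrix (Fin a) (Fin b) R}
    {E : Matrix (Fin b) (Fin c) R} (hDE : D * E = 0) {N : Type*} [AddCommGroup N] [Module R N]
    {x : R} (hx : IsSMulRegular N x) {q : ℕ} (hxq : x ^ q ∈ nullHomotopyIdeal D E) :
    Module.length R (MatrixHomology D E N) ≤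
      q * Module.length R (MatrixHomology D E (QuotSMulTop x N)) :=
  calc Module.length R (MatrixHomology D E N)
      = Module.length R (QuotSMulTop (x ^ q) (MatrixHomology D E N)) :=
        (length_quotSMulTop_of_mem_annihilator (nullHomotopyIdeal_le_annihilator D E N hxq)).symm
    _ ≤ q * Module.length R (QuotSMulTop x (MatrixHomology D E N)) :=
        length_quotSMulTop_pow_le x q
    _ ≤ q * Module.length R (MatrixHomology D E (QuotSMulTop x N)) := by
        gcongr
        exact length_quotSMulTop_le hDE hx

end NullHomotopy

section FrobeniusGrowth

variable {R : Type*} [CommRing R] (p : ℕ) [ExpChar R p] {a b c : ℕ}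
  {D : Matrix (Fin a) (Fin b) R} {E : Matrix (Fin b) (Fin c) R}
  {N N' N'' : Type*} [AddCommGroup N] [Module R N] [AddCommGroup N'] [Module R N']
  [AddCommGroup N''] [Module R N'']

/-- The homology with coefficients in `N` of the Frobenius powers of `D` and `E` has length
`O(q ^ t)` as `q = p ^ e` varies. -/
def HasFrobeniusGrowth (D : Matrix (Fin a) (Fin b) R) (E : Matrix (Fin b) (Fin c) R)
    (N : Type*) [AddCommGroup N] [Module R N] (t : ℕ) : Prop :=
  ∃ C : ℕ, ∀ e : ℕ, Module.length R (MatrixHomology (D.map (iterateFrobenius R p e))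
    (E.map (iterateFrobenius R p e)) N) ≤ (C * (p ^ e) ^ t : ℕ)

namespace HasFrobeniusGrowth

variable {p}

theorem of_length_ne_top (hN : Module.length R N ≠ ⊤) (t : ℕ) :
    HasFrobeniusGrowth p D E N t := by
  obtain ⟨l, hl⟩ := ENat.ne_top_iff_exists.1 hN
  refine ⟨b * l, fun e => (MatrixHomology.length_le _ _).trans ?_⟩
  rw [← hl]
  exact_mod_cast Nat.le_mul_of_pos_right (b * l) (Nat.pow_pos (expChar_pow_pos R p e))

theorem of_exact (hDE : D * E = 0) {f : N' →ₗ[R] N} {g : N →ₗ[R] N''}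
    (hf : Function.Injective f) (hg : Function.Surjective g) (hfg : Function.Exact f g) {t : ℕ}
    (hN' : HasFrobeniusGrowth p D E N' t) (hN'' : HasFrobeniusGrowth p D E N'' t) :
    HasFrobeniusGrowth p D E N t := by
  obtain ⟨C', hC'⟩ := hN'
  obtain ⟨C'', hC''⟩ := hN''
  refine ⟨C' + C'', fun e => ?_⟩
  rw [add_mul, Nat.cast_add]
  exact (MatrixHomology.length_le_add (map_mul_map_eq_zero _ hDE) hf hg hfg).trans
    (add_le_add (hC' e) (hC'' e))

theorem of_quotSMulTop (hDE : D * E = 0) {x : R} (hx : x ∈ nullHomotopyIdeal D E)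
    (hreg : IsSMulRegular N x) {t : ℕ} (hN : HasFrobeniusGrowth p D E (QuotSMulTop x N) t) :
    HasFrobeniusGrowth p D E N (t + 1) := by
  obtain ⟨C, hC⟩ := hN
  refine ⟨C, fun e => ?_⟩
  have hxe : x ^ p ^ e ∈ nullHomotopyIdeal (D.map (iterateFrobenius R p e))
      (E.map (iterateFrobenius R p e)) := map_mem_nullHomotopyIdeal (iterateFrobenius R p e) hx
  calc Module.length R (MatrixHomology (D.map (iterateFrobenius R p e))
        (E.map (iterateFrobenius R p e)) N)
      ≤ (p ^ e : ℕ) * Module.length R (MatrixHomology (D.map (iterateFrobenius R p e))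
        (E.map (iterateFrobenius R p e)) (QuotSMulTop x N)) :=
        MatrixHomology.length_le_mul_length_quotSMulTop
          (map_mul_map_eq_zero _ hDE) hreg hxe
    _ ≤ (p ^ e : ℕ) * (C * (p ^ e) ^ t : ℕ) := by gcongr; exact hC e
    _ = (C * (p ^ e) ^ (t + 1) : ℕ) := by rw [← Nat.cast_mul]; congr 1; ring

theorem of_equiv_quotient_prime {P : Ideal R} [P.IsPrime] (f : N ≃ₗ[R] R ⧸ P) (hDE : D * E = 0)
    (hP : nullHomotopyIdeal D E ≤ P → P.IsMaximal) {t : ℕ}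
    (ht : Module.supportDim R N ≤ (t + 1 : ℕ))
    (ih : ∀ x : R, Module.supportDim R (QuotSMulTop x N) ≤ t →
      HasFrobeniusGrowth p D E (QuotSMulTop x N) t) :
    HasFrobeniusGrowth p D E N (t + 1) := by
  by_cases hle : nullHomotopyIdeal D E ≤ P
  · have : IsSimpleModule R (R ⧸ P) :=
      isSimpleModule_iff_isCoatom.2 (Ideal.isMaximal_def.1 (hP hle))
    refine of_length_ne_top ?_ _
    rw [f.length_eq, Module.length_eq_one]
    exact ENat.one_ne_top
  · obtain ⟨x, hx, hxP⟩ := SetLike.not_le_iff_exists.1 hle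
    have hreg : IsSMulRegular N x := by
      rw [f.isSMulRegular_congr, ← isSMulRegular_algebraMap_iff (A := R ⧸ P)]
      exact .of_ne_zero (mt Ideal.Quotient.eq_zero_iff_mem.1 hxP)
    have : Module.Finite R N := .equiv f.symm
    have hdim : Module.supportDim R (QuotSMulTop x N) + 1 ≤ (t + 1 : ℕ) :=
      (Module.supportDim_quotSMulTop_succ_le_of_notMem_minimalPrimes
        fun _ => hreg.notMem_of_mem_minimalPrimes).trans ht
    exact of_quotSMulTop hDE hx hreg (ih x (ENat.WithBot.add_le_add_one_right_iff.1 hdim))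

end HasFrobeniusGrowth

theorem hasFrobeniusGrowth_of_supportDim_le [IsNoetherianRing R] (hDE : D * E = 0)
    (hmax : ∀ P : Ideal R, P.IsPrime → nullHomotopyIdeal D E ≤ P → P.IsMaximal)
    [Module.Finite R N] {t : ℕ} (ht : Module.supportDim R N ≤ t) :
    HasFrobeniusGrowth p D E N t := by
  induction t generalizing N with
  | zero => exact .of_length_ne_top (length_ne_top_of_supportDim_le_zero ht) 0
  | succ t ih =>
    induction ‹Module.Finite R N› using
      IsNoetherianRing.induction_on_isQuotientEquivQuotientPrime R with
    | subsingleton N => exact .of_length_ne_top (by simp) _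
    | quotient N P f =>
      exact .of_equiv_quotient_prime f hDE (hmax P.1 P.2) ht fun x hx => ih hx
    | exact N₁ N₂ N₃ f g hf hg hfg ih₁ ih₃ =>
      exact .of_exact hDE hf hg hfg (ih₁ ((Module.supportDim_le_of_injective f hf).trans ht))
        (ih₃ ((Module.supportDim_le_of_surjective g hg).trans ht))

end FrobeniusGrowth

section Complex

variable {R : Type*} [CommRing R]

/-- The rank of the target of the differential leaving degree `i`, with the convention that this
target is `0` in degree `0`. -/
def outRank (r : ℕ → ℕ) : ℕ → ℕ
  | 0 => 0
  | i + 1 => r i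

/-- The matrix of the differential leaving degree `i`. It is the empty matrix when `i = 0`, so that
every homology module of the complex is the `MatrixHomology` of a pair of matrices. -/
def outMatrix (r : ℕ → ℕ) (A : ∀ j, Matrix (Fin (r j)) (Fin (r (j + 1))) R) :
    ∀ i, Matrix (Fin (outRank r i)) (Fin (r i)) R
  | 0 => 0
  | i + 1 => A i

variable (r : ℕ → ℕ) (A : ∀ j, Matrix (Fin (r j)) (Fin (r (j + 1))) R)

theorem outMatrix_map (φ : R → R) (i : ℕ) :
    outMatrix r (fun j => (A j).map φ) i = (outMatrix r A i).map φ := by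
  cases i with
  | zero => exact Matrix.ext fun i => i.elim0
  | succ i => rfl

variable {A} in
theorem outMatrix_mul (hA : ∀ j, A j * A (j + 1) = 0) (i : ℕ) : outMatrix r A i * A i = 0 := by
  cases i with
  | zero => exact Matrix.zero_mul _
  | succ i => exact hA i

theorem homologyLength_eq (N : Type*) [AddCommGroup N] [Module R N] (i : ℕ) :
    homologyLength r A N i = (Module.length R (MatrixHomology (outMatrix r A i) (A i) N) : ℕ∞) := by
  cases i with
  | succ i => exact (Module.coe_length R _).symm
  | zero =>
    refine (Module.coe_length R _).symm.trans (congrArg _ ?_)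
    have htop : LinearMap.ker (matVec (outMatrix r A 0) N) = ⊤ :=
      Submodule.eq_top_iff'.2 matVec_zero
    refine (Submodule.Quotient.equiv _ _ (LinearEquiv.ofTop _ htop) ?_).length_eq.symm
    exact Submodule.map_comap_eq_of_surjective (LinearEquiv.ofTop _ htop).surjective _

variable {r A}

theorem isMaximal_of_nullHomotopyIdeal_le (hA : ∀ j, A j * A (j + 1) = 0) {i : ℕ}
    (hfin : ∀ j ≤ i, Module.length R (MatrixHomology (outMatrix r A j) (A j) R) ≠ ⊤)
    {P : Ideal R} (hP : P.IsPrime) (hle : nullHomotopyIdeal (outMatrix r A i) (A i) ≤ P) :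
    P.IsMaximal := by
  induction i with
  | zero =>
    exact isMaximal_of_annihilator_le (hfin 0 le_rfl)
      ((annihilator_le_nullHomotopyIdeal_zero (A 0)).trans hle)
  | succ i ih =>
    have hmul := nullHomotopyIdeal_mul_annihilator_le (A (i + 1)) (outMatrix_mul r hA i)
    exact (hP.mul_le.1 (hmul.trans hle)).elim (ih fun j hj => hfin j (hj.trans i.le_succ))
      (isMaximal_of_annihilator_le (hfin (i + 1) le_rfl))

end Complex

theorem seibert_upper_bound_general {R : Type*} [CommRing R] [IsNoetherianRing R]
    (p : ℕ) [ExpChar R p]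
    (r : ℕ → ℕ) (A : ∀ j, Matrix (Fin (r j)) (Fin (r (j + 1))) R)
    (hcomplex : ∀ j, A j * A (j + 1) = 0) (i : ℕ)
    (hGfl : ∀ j ≤ i, homologyLength r A R j < ⊤)
    (N : Type*) [AddCommGroup N] [Module R N] [Module.Finite R N]
    (t : ℕ) (ht : Module.supportDim R N ≤ t) :
    ∃ C : ℕ, ∀ e : ℕ,
      homologyLength r (fun j => (A j).map (· ^ p ^ e)) N i ≤ ((C * (p ^ e) ^ t : ℕ) : ℕ∞) := by
  have hfin : ∀ j ≤ i, Module.length R (MatrixHomology (outMatrix r A j) (A j) R) ≠ ⊤ := by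
    intro j hj htop
    simpa [homologyLength_eq, htop] using hGfl j hj
  obtain ⟨C, hC⟩ : HasFrobeniusGrowth p (outMatrix r A i) (A i) N t :=
    hasFrobeniusGrowth_of_supportDim_le p (outMatrix_mul r hcomplex i)
      (fun _ => isMaximal_of_nullHomotopyIdeal_le hcomplex hfin) ht
  refine ⟨C, fun e => ?_⟩
  rw [homologyLength_eq, outMatrix_map]
  exact WithBot.coe_le_coe.2 (hC e)

/-- Seibert's theorem (upper-bound portion): let `G•` be a bounded-below complex of finite
free modules over a Noetherian local ring of characteristic `p`, given by matrices `A j`,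
with finite length homology, and let `N` be a finitely generated module of dimension `t`.
Then the homology of `F^e(G•) ⊗ N` (where `F^e` raises the matrix entries to the `q = p^e`
power) has finite length, bounded by `C·qᵗ`. -/
theorem seibert_upper_bound {R : Type*} [CommRing R] [IsNoetherianRing R] [IsLocalRing R]
    (p : ℕ) [Fact p.Prime] [CharP R p]
    (r : ℕ → ℕ) (A : ∀ j, Matrix (Fin (r j)) (Fin (r (j + 1))) R)
    (hcomplex : ∀ j, A j * A (j + 1) = 0)
    (hGfl : ∀ i, homologyLength r A R i < ⊤)
    (N : Type*) [AddCommGroup N] [Module R N] [Module.Finite R N]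
    (t : ℕ) (ht : ringKrullDim (R ⧸ Module.annihilator R N) = (t : WithBot ℕ∞))
    (i : ℕ) :
    ∃ C : ℕ, ∀ e : ℕ,
      homologyLength r (fun j => (A j).map (· ^ p ^ e)) N i ≤ ((C * (p ^ e) ^ t : ℕ) : ℕ∞) := by
  rw [← Module.supportDim_eq_ringKrullDim_quotient_annihilator] at ht
  exact seibert_upper_bound_general p r A hcomplex i (fun j _ => hGfl j) N t ht.le
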